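/- Let G be any group and E a separable dual Banach G-module. Suppose that every countable subset of G is contained in a subgroup G₁ ≤ G such that Hb^n(G₁, E) = 0 for all n ≥ 1 (with E viewed as a G₁-module by restriction). Then Hb^n(G, E) = 0 for all n ≥ 1. -/

import Mathlib

open scoped BigOperators

/-- A cochain (function into a normed space) is bounded if its norms are uniformly bounded. -/
def IsBddCochain {G : Type*} {E : Type*} [NormedAddCommGroup E] {n : ℕ}
    (f : (Fin n → G) → E) : Prop :=
  ∃ C : ℝ, ∀ g, ‖f g‖ ≤ C

/-- The inhomogeneous coboundary operator of bounded cohomology, for an action `π` of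
`G` on `E`:
`(δf)(g₁,…,g_{n+1}) = g₁•f(g₂,…,g_{n+1}) + ∑_{i=1}^{n} (−1)^i f(g₁,…,g_i·g_{i+1},…,g_{n+1})`
`+ (−1)^{n+1} f(g₁,…,g_n)`. -/
def bddDelta {G : Type*} [Group G] {E : Type*} [NormedAddCommGroup E] [Module ℝ E]
    (π : G → E → E) (n : ℕ) (f : (Fin n → G) → E) : (Fin (n + 1) → G) → E :=
  fun g =>
    π (g 0) (f (fun j => g j.succ)) +
    (∑ i : Fin n, ((-1 : ℝ) ^ ((i : ℕ) + 1)) •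
      f (fun j => if (j : ℕ) < (i : ℕ) then g (Fin.castSucc j)
        else if (j : ℕ) = (i : ℕ) then g (Fin.castSucc j) * g j.succ
        else g j.succ)) +
    ((-1 : ℝ) ^ (n + 1)) • f (fun j => g (Fin.castSucc j))

/-- Vanishing of the bounded cohomology `Hb^n(G,E)` for all `n ≥ 1`, with respect to the
`G`-action `π` on `E`: every bounded cocycle of degree `n ≥ 1` is the coboundary of a
bounded cochain. -/
def HbVanish {G : Type*} [Group G] {E : Type*} [NormedAddCommGroup E] [Module ℝ E]
    (π : G → E → E) : Prop :=
  ∀ (n : ℕ) (f : (Fin (n + 1) → G) → E), IsBddCochain f →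
    bddDelta π (n + 1) f = 0 →
    ∃ b : (Fin n → G) → E, IsBddCochain b ∧ bddDelta π n b = f

/-- A group is boundedly acyclic if `Hb^n(G,ℝ) = 0` for all `n ≥ 1`, where `ℝ` carries
the trivial `G`-action. -/
def BoundedlyAcyclic (G : Type*) [Group G] : Prop :=
  HbVanish (G := G) (E := ℝ) (fun _ v => v)

/-- The contragredient action of `G` on the continuous dual of `F` induced by an
isometric action `ρ` of `G` on `F`: `(g • φ)(v) = φ (g⁻¹ • v)`. -/
def contragredient {G : Type*} [Group G] {F : Type*} [NormedAddCommGroup F]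
    [NormedSpace ℝ F] (ρ : G →* (F ≃ₗᵢ[ℝ] F)) : G → (F →L[ℝ] ℝ) → (F →L[ℝ] ℝ) :=
  fun g φ => φ.comp (ρ g⁻¹).toLinearIsometry.toContinuousLinearMap

lemma exists_limit_cochain {G : Type*} [Group G] {F : Type*} [NormedAddCommGroup F]
    [NormedSpace ℝ F] (ρ : G →* (F ≃ₗᵢ[ℝ] F)) (n : ℕ) (f : (Fin (n + 1) → G) → (F →L[ℝ] ℝ))
    (K : ℝ)
    (hb : ∀ S : Finset G, ∃ b : (Fin n → G) → (F →L[ℝ] ℝ), (∀ g, ‖b g‖ ≤ K) ∧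
      ∀ g : Fin (n + 1) → G, (∀ j, g j ∈ S) → bddDelta (contragredient ρ) n b g = f g) :
    ∃ b : (Fin n → G) → (F →L[ℝ] ℝ), IsBddCochain b ∧
      bddDelta (contragredient ρ) n b = f := by
  classical
  choose b hbK hbf using hb
  let U : Ultrafilter (Finset G) := Ultrafilter.of Filter.atTop
  have hU : (U : Filter (Finset G)) ≤ Filter.atTop := Ultrafilter.of_le _
  have key : ∀ g : Fin n → G, ∃ l : F →L[ℝ] ℝ, ‖l‖ ≤ K ∧
      ∀ v, Filter.Tendsto (fun S => b S g v) U (nhds (l v)) := by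
    intro g
    have hc := WeakDual.isCompact_closedBall (𝕜 := ℝ) (E := F) 0 K
    obtain ⟨l, hl, hlim⟩ := hc.ultrafilter_le_nhds
      (U.map (fun S => StrongDual.toWeakDual (b S g))) (by
        rw [Filter.le_principal_iff]
        refine Filter.mem_map.2 (Filter.univ_mem' fun S => ?_)
        simpa using hbK S g)
    refine ⟨WeakDual.toStrongDual l, by simpa using hl, fun v => ?_⟩
    have h1 : Filter.Tendsto (fun S => StrongDual.toWeakDual (b S g)) U (nhds l) := hlim
    exact ((WeakDual.eval_continuous v).tendsto l).comp h1
  choose l hlK hl using key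
  refine ⟨l, ⟨K, hlK⟩, ?_⟩
  funext g
  ext v
  have h1 : Filter.Tendsto (fun S => bddDelta (contragredient ρ) n (b S) g v) U
      (nhds (bddDelta (contragredient ρ) n l g v)) := by
    simp only [bddDelta, contragredient, ContinuousLinearMap.add_apply,
      ContinuousLinearMap.sum_apply, ContinuousLinearMap.smul_apply,
      ContinuousLinearMap.comp_apply]
    exact ((hl _ _).add (tendsto_finsetSum _ fun i _ => (hl _ _).const_smul _)).add
      ((hl _ _).const_smul _)
  have h2 : Filter.Tendsto (fun S => bddDelta (contragredient ρ) n (b S) g v) U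
      (nhds (f g v)) := by
    refine tendsto_const_nhds.congr' ?_
    have : ∀ᶠ S in (U : Filter (Finset G)), Finset.univ.image g ≤ S :=
      hU (Filter.eventually_ge_atTop _)
    filter_upwards [this] with S hS
    rw [hbf S g fun j => hS (Finset.mem_image_of_mem g (Finset.mem_univ j))]
  exact tendsto_nhds_unique h1 h2

/-- Restriction of cochains to a subgroup commutes with the coboundary. -/
lemma bddDelta_restrict {G : Type*} [Group G] {F : Type*} [NormedAddCommGroup F]
    [NormedSpace ℝ F] (ρ : G →* (F ≃ₗᵢ[ℝ] F)) (G₁ : Subgroup G) (n : ℕ)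
    (B : (Fin n → G) → (F →L[ℝ] ℝ)) (b : (Fin n → G₁) → (F →L[ℝ] ℝ))
    (hB : ∀ x : Fin n → G₁, B (fun j => (x j : G)) = b x) (g : Fin (n + 1) → G₁) :
    bddDelta (contragredient ρ) n B (fun j => (g j : G)) =
      bddDelta (contragredient (ρ.comp G₁.subtype)) n b g := by
  simp only [bddDelta, ← hB]
  congr 2
  refine Finset.sum_congr rfl fun i _ => ?_
  congr 2
  funext j
  split_ifs <;> rfl

/-- Let `E = F*` be a separable dual Banach `G`-module.  If every
countable subset of `G` is contained in a subgroup `G₁ ≤ G` with `Hb^n(G₁,E) = 0` for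
all `n ≥ 1` (for the restricted action), then `Hb^n(G,E) = 0` for all `n ≥ 1`. -/
theorem vanishing_from_countable_subgroups.{u}
    {G : Type*} [Group G]
    (F : Type u) [NormedAddCommGroup F] [NormedSpace ℝ F] [CompleteSpace F]
    (ρ : G →* (F ≃ₗᵢ[ℝ] F))
    (hsep : TopologicalSpace.SeparableSpace (F →L[ℝ] ℝ))
    (h : ∀ C : Set G, C.Countable → ∃ G₁ : Subgroup G, C ⊆ G₁ ∧
      HbVanish (contragredient (ρ.comp G₁.subtype))) :
    HbVanish (contragredient ρ) := by
  classical
  intro n f ⟨M, hM⟩ hf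
  -- every countable set admits a primitive
  have step : ∀ C : Set G, C.Countable → ∃ K : ℕ, ∃ b : (Fin n → G) → (F →L[ℝ] ℝ),
      (∀ g, ‖b g‖ ≤ K) ∧ ∀ g : Fin (n + 1) → G, (∀ j, g j ∈ C) →
        bddDelta (contragredient ρ) n b g = f g := by
    intro C hC
    obtain ⟨G₁, hCG, hv⟩ := h C hC
    obtain ⟨b, ⟨K, hK⟩, hb⟩ := hv n (fun x => f (fun j => (x j : G))) ⟨M, fun g => hM _⟩ (by
      funext g
      rw [← bddDelta_restrict ρ G₁ (n + 1) f _ (fun _ => rfl) g, hf]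
      rfl)
    obtain ⟨N, hN⟩ := exists_nat_ge K
    refine ⟨N, fun x => if hx : ∀ j, x j ∈ G₁ then b (fun j => ⟨x j, hx j⟩) else 0, ?_, ?_⟩
    · intro g
      dsimp only
      split_ifs
      · exact (hK _).trans hN
      · simp
    · intro g hg
      have := bddDelta_restrict ρ G₁ n
        (fun x => if hx : ∀ j, x j ∈ G₁ then b (fun j => ⟨x j, hx j⟩) else 0) b
        (fun x => by simp) (fun j => ⟨g j, hCG (hg j)⟩)
      rw [hb] at this
      exact this
  -- uniform bound
  have unif : ∃ K : ℕ, ∀ S : Finset G, ∃ b : (Fin n → G) → (F →L[ℝ] ℝ),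
      (∀ g, ‖b g‖ ≤ K) ∧ ∀ g : Fin (n + 1) → G, (∀ j, g j ∈ S) →
        bddDelta (contragredient ρ) n b g = f g := by
    by_contra hcon
    push Not at hcon
    choose S hS using hcon
    obtain ⟨K, b, hbK, hb⟩ := step (⋃ K, (S K : Set G))
      (Set.countable_iUnion fun K => (S K).countable_toSet)
    obtain ⟨g, hg, hne⟩ := hS K b hbK
    exact hne (hb g fun j => Set.mem_iUnion.2 ⟨K, hg j⟩)
  obtain ⟨K, hK⟩ := unif
  exact exists_limit_cochain ρ n f K hK
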